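/- arXiv:2301.00586 — 2 statements merged into one kernel-verified Lean document; each statement's English description precedes it below -/
import Mathlib

section
/- Let F denote any one of the four Nevanlinna functions A, B, C, D on ℂ², and for v ∈ ℂ set Z(F)_v := {u ∈ ℂ : F(u,v) = 0}. Then Z(F)_v is countably infinite; if v ∈ ℝ then Z(F)_v ⊂ ℝ; if Im v > 0 then every u ∈ Z(F)_v satisfies Im u > 0; and if Im v < 0 then every u ∈ Z(F)_v satisfies Im u < 0. -/
/-!
For `s, t ∈ {p, q}` write `F(u, v)` for the corresponding Nevanlinna function. By the
Christoffel–Darboux formula (`wron_eq`) it is the limit of the Wronskians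
`aₙ (fₙ₊₁ gₙ - fₙ gₙ₊₁)` of the solutions `f = sol s u`, `g = sol t v` of the recurrence, and these
are `2 × 2` minors, so the limits satisfy the Plücker relation (`nev_plucker`). Moreover the
function belonging to `(f, f̄)` is `2 i Im u ‖f‖²` (`nev_conj_right`). All location statements
follow from two instances:

* with `f, g, f̄, ḡ`: `|F(u, v)|² + 4 Im u Im v ‖f‖² ‖g‖² = |F(u, v̄)|²` (`norm_nev_sq`), so a zero
  has `Im u Im v ≥ 0`;
* with `f, f̄` and the two basic solutions at a real `v`, whose Wronskian is `±1`:
  `|Im u| ‖f‖² ≤ |F(u, v)| |F'(u, v)|`, where `F'` pairs `f` with the other basic solution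
  (`im_mul_sqn_le`), so `v` real forces `u` real, and by antisymmetry `u` real forces `v` real.

For the cardinality, expressing `f` through the basic solutions at `v` (variation of parameters)
gives a discrete Grönwall estimate with the summable weights `|pₙ(v)|² + |qₙ(v)|²`
(`energy_le`). Started at a large index, it shows that `F(·, v)` is entire of minimal exponential
type (`nev_differentiable`, `minType_nev`); being non-zero somewhere, it has countably many zeros.
If there were finitely many, dividing them out would leave the exponential of an entire function,
constant by Borel–Carathéodory, and `F(·, v)` would have polynomial growth
(`polynomial_growth_of_finite_zeros`). But the two identities above also bound `|F(u, v)|` from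
below by a multiple of `‖f‖` along an imaginary half-axis (`exists_lower`), and `‖f‖` dominates
polynomials of every degree (`sol_lower`).
-/

open Filter Topology MeasureTheory

noncomputable section

/-- Action of the Jacobi matrix `J` on a complex sequence:
`(Jc)ₙ = aₙ₋₁cₙ₋₁ + bₙcₙ + aₙcₙ₊₁` with `a₋₁ := 0`. -/
def jacobiMul (a b : ℕ → ℝ) (c : ℕ → ℂ) : ℕ → ℂ
  | 0 => (b 0 : ℂ) * c 0 + (a 0 : ℂ) * c 1
  | n + 1 => (a n : ℂ) * c n + (b (n + 1) : ℂ) * c (n + 1) + (a (n + 1) : ℂ) * c (n + 2)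

/-- `jacobiGraph a b f g` means: `f` belongs to the domain `D(T)` of the closure `T` of the
Jacobi matrix acting on the finitely supported sequences, and `T f = g`; i.e. there are
finitely supported sequences `u k → f` in `ℓ²` such that `J (u k) → g` in `ℓ²`. -/
def jacobiGraph (a b : ℕ → ℝ) (f g : ℕ → ℂ) : Prop :=
  ∃ u : ℕ → ℕ → ℂ,
    (∀ k, (Function.support (u k)).Finite) ∧
    (∀ k, Summable fun n => ‖u k n - f n‖ ^ 2) ∧
    Tendsto (fun k => ∑' n, ‖u k n - f n‖ ^ 2) atTop (𝓝 0) ∧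
    (∀ k, Summable fun n => ‖jacobiMul a b (u k) n - g n‖ ^ 2) ∧
    Tendsto (fun k => ∑' n, ‖jacobiMul a b (u k) n - g n‖ ^ 2) atTop (𝓝 0)

/-- Membership in the domain `D(T)` of the Jacobi operator. -/
def inDomT (a b : ℕ → ℝ) (f : ℕ → ℂ) : Prop := ∃ g, jacobiGraph a b f g

/-- The `ℓ²` norm of a complex sequence. -/
def l2norm (f : ℕ → ℂ) : ℝ := Real.sqrt (∑' n, ‖f n‖ ^ 2)

/-- The data of an indeterminate Hamburger moment problem: Jacobi parameters `a`, `b`,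
the orthonormal polynomials `p` and second-kind polynomials `q` (as entire functions),
determined by the three-term recurrence, together with the indeterminacy condition
`∑ₙ (|pₙ(z)|² + |qₙ(z)|²) < ∞` for all `z`. -/
structure JacobiSetup where
  a : ℕ → ℝ
  b : ℕ → ℝ
  ha : ∀ n, 0 < a n
  p : ℕ → ℂ → ℂ
  q : ℕ → ℂ → ℂ
  hp0 : ∀ z, p 0 z = 1
  hp1 : ∀ z, p 1 z = (z - (b 0 : ℂ)) / (a 0 : ℂ)
  hq0 : ∀ z, q 0 z = 0
  hq1 : ∀ z, q 1 z = 1 / (a 0 : ℂ)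
  hrecp : ∀ n z, z * p (n + 1) z =
    (a (n + 1) : ℂ) * p (n + 2) z + (b (n + 1) : ℂ) * p (n + 1) z + (a n : ℂ) * p n z
  hrecq : ∀ n z, z * q (n + 1) z =
    (a (n + 1) : ℂ) * q (n + 2) z + (b (n + 1) : ℂ) * q (n + 1) z + (a n : ℂ) * q n z
  indet : ∀ z : ℂ, Summable fun n => ‖p n z‖ ^ 2 + ‖q n z‖ ^ 2

/-- The Nevanlinna function `A(u,v)`. -/
def nevA (S : JacobiSetup) (u v : ℂ) : ℂ := (u - v) * ∑' k, S.q k u * S.q k v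
/-- The Nevanlinna function `B(u,v)`. -/
def nevB (S : JacobiSetup) (u v : ℂ) : ℂ := -1 + (u - v) * ∑' k, S.p k u * S.q k v
/-- The Nevanlinna function `C(u,v)`. -/
def nevC (S : JacobiSetup) (u v : ℂ) : ℂ := 1 + (u - v) * ∑' k, S.q k u * S.p k v
/-- The Nevanlinna function `D(u,v)`. -/
def nevD (S : JacobiSetup) (u v : ℂ) : ℂ := (u - v) * ∑' k, S.p k u * S.p k v

/-! ### Entire functions of minimal exponential type -/

/-- An entire function without zeros is, up to a constant, the exponential of an entire
function: a primitive of its logarithmic derivative. -/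
lemma exists_log_of_ne_zero {H : ℂ → ℂ} (hd : Differentiable ℂ H) (hz : ∀ z, H z ≠ 0) :
    ∃ g : ℂ → ℂ, Differentiable ℂ g ∧ g 0 = 0 ∧ ∀ z, H z = H 0 * Complex.exp (g z) := by
  have hd' : Differentiable ℂ (deriv H) := hd.contDiff.differentiable_deriv_two
  have hq : Differentiable ℂ (fun z => deriv H z / H z) := fun z => (hd' z).div (hd z) (hz z)
  obtain ⟨g, hg0, hg⟩ := hq.isExactOn_univ.with_val_at 0 0
  have hg' : ∀ z, HasDerivAt g (deriv H z / H z) z := fun z => hg z trivial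
  refine ⟨g, fun z => (hg' z).differentiableAt, hg0, ?_⟩
  have key : ∀ z, HasDerivAt (fun z => H z * Complex.exp (-g z)) 0 z := by
    intro z
    have := (hd z).hasDerivAt.mul (hg' z).neg.cexp
    have e : deriv H z * Complex.exp ((-g) z) +
        H z * (Complex.exp ((-g) z) * -(deriv H z / H z)) = 0 := by
      have h1 : H z * (deriv H z / H z) = deriv H z := mul_div_cancel₀ _ (hz z)
      linear_combination -Complex.exp ((-g) z) * h1
    rw [e] at this
    exact this
  intro z
  have hc := is_const_of_deriv_eq_zero (fun z => (key z).differentiableAt)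
    (fun z => (key z).deriv) z 0
  simp only [hg0, neg_zero, Complex.exp_zero, mul_one] at hc
  rw [← hc, mul_assoc, ← Complex.exp_add]
  simp

/-- A zero-free entire function of minimal exponential type is constant: its logarithm `g` has
real part at most `ε R + O(1)` on `‖z‖ < R`, so the Borel–Carathéodory inequality, as
`R → ∞`, gives `‖g z‖ ≤ 2 ε ‖z‖` for every `ε > 0`. -/
lemma eq_const_of_ne_zero {H : ℂ → ℂ} (hd : Differentiable ℂ H) (hz : ∀ z, H z ≠ 0)
    (hgr : ∀ ε > 0, ∃ C : ℝ, ∀ z, ‖H z‖ ≤ C * Real.exp (ε * ‖z‖)) (z : ℂ) : H z = H 0 := by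
  obtain ⟨g, hgd, hg0, hg⟩ := exists_log_of_ne_zero hd hz
  suffices h : g z = 0 by rw [hg z, h]; simp
  have main : ∀ ε > 0, ‖g z‖ ≤ 2 * ε * ‖z‖ := by
    intro ε hε
    obtain ⟨C, hC⟩ := hgr ε hε
    have h0 : 0 < ‖H 0‖ := norm_pos_iff.2 (hz 0)
    have hCpos : ‖H 0‖ ≤ C := by simpa using hC 0
    have hC0 : 0 < C := h0.trans_le hCpos
    have hre : ∀ w, (g w).re ≤ ε * ‖w‖ + Real.log (C / ‖H 0‖) := by
      intro w
      have h1 := hC w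
      rw [hg w, norm_mul, Complex.norm_exp] at h1
      have h2 : Real.exp (g w).re ≤ Real.exp (ε * ‖w‖ + Real.log (C / ‖H 0‖)) := by
        rw [Real.exp_add, Real.exp_log (by positivity)]
        calc _ ≤ C * Real.exp (ε * ‖w‖) / ‖H 0‖ := by rw [le_div_iff₀ h0]; linarith
          _ = _ := by ring
      exact Real.exp_le_exp.1 h2
    set L := Real.log (C / ‖H 0‖) with hL
    have hLnn : 0 ≤ L := Real.log_nonneg (by rw [le_div_iff₀ h0]; linarith)
    have hbc : ∀ R > ‖z‖, ‖g z‖ * (R - ‖z‖) ≤ 2 * (ε * R + L) * ‖z‖ := by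
      intro R hR
      have hR0 : 0 < R := (norm_nonneg z).trans_lt hR
      have := Complex.borelCaratheodory_zero (f := g) (M := ε * R + L) (R := R) (z := z)
        (by positivity) hgd.differentiableOn
        (fun w hw => (hre w).trans (by
          have : ‖w‖ < R := by simpa using hw
          gcongr)) hR0 (by simpa using hR) hg0
      rwa [le_div_iff₀ (by linarith)] at this
    have hlim1 : Tendsto (fun R : ℝ => R⁻¹) atTop (𝓝 0) := tendsto_inv_atTop_zero
    have hl : Tendsto (fun R : ℝ => ‖g z‖ * (1 - ‖z‖ * R⁻¹)) atTop (𝓝 (‖g z‖ * (1 - ‖z‖ * 0))) :=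
      (tendsto_const_nhds.sub (hlim1.const_mul _)).const_mul _
    have hr : Tendsto (fun R : ℝ => 2 * (ε + L * R⁻¹) * ‖z‖) atTop
        (𝓝 (2 * (ε + L * 0) * ‖z‖)) :=
      ((tendsto_const_nhds.add (hlim1.const_mul _)).const_mul _).mul_const _
    have := le_of_tendsto_of_tendsto hl hr (by
      filter_upwards [eventually_gt_atTop ‖z‖] with R hR
      have hR0 : 0 < R := (norm_nonneg z).trans_lt hR
      have h3 := hbc R hR
      have e1 : ‖g z‖ * (1 - ‖z‖ * R⁻¹) = ‖g z‖ * (R - ‖z‖) * R⁻¹ := by field_simp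
      have e2 : 2 * (ε + L * R⁻¹) * ‖z‖ = 2 * (ε * R + L) * ‖z‖ * R⁻¹ := by field_simp
      rw [e1, e2]
      gcongr)
    simpa using this
  have hlim : Tendsto (fun ε : ℝ => 2 * ε * ‖z‖) (𝓝[>] 0) (𝓝 (2 * 0 * ‖z‖)) :=
    ((tendsto_id.mono_left nhdsWithin_le_nhds).const_mul _).mul_const _
  have := ge_of_tendsto hlim (by filter_upwards [self_mem_nhdsWithin] with ε hε using main ε hε)
  simpa using this

/-- An entire function of minimal exponential type with finitely many zeros has polynomial
growth (it is a polynomial): divide out the zeros one point at a time. -/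
lemma polynomial_growth_of_finite_zeros (n : ℕ) : ∀ G : ℂ → ℂ, Differentiable ℂ G →
    {z | G z = 0}.Finite → {z | G z = 0}.ncard = n →
    (∀ ε > 0, ∃ C : ℝ, ∀ z, ‖G z‖ ≤ C * Real.exp (ε * ‖z‖)) →
    ∃ C : ℝ, ∃ N : ℕ, ∀ z, ‖G z‖ ≤ C * (1 + ‖z‖) ^ N := by
  induction n with
  | zero =>
    intro G hd hfin hcard hgr
    have h0 : {z | G z = 0} = ∅ := (Set.ncard_eq_zero hfin).1 hcard
    have hz : ∀ z, G z ≠ 0 := fun z hz => by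
      have : z ∈ {z | G z = 0} := hz
      rw [h0] at this
      exact this
    exact ⟨‖G 0‖, 0, fun z => by rw [eq_const_of_ne_zero hd hz hgr z]; simp⟩
  | succ n ih =>
    intro G hd hfin hcard hgr
    have hne : {z | G z = 0}.Nonempty := by
      rw [← Set.ncard_pos hfin]; omega
    obtain ⟨c, hc⟩ := hne
    obtain ⟨p, hp⟩ := hd.analyticAt c
    have hp0 : p ≠ 0 := by
      intro h
      have hev := hp.locally_zero_iff.2 h
      have : {z | G z = 0} ∈ 𝓝 c := hev
      exact (infinite_of_mem_nhds c this) hfin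
    set H := (Function.swap dslope c)^[p.order] G with hH
    have hGH : ∀ z, G z = (z - c) ^ p.order * H z := fun z =>
      hp.eq_pow_order_mul_iterate_dslope z
    have hHc : H c ≠ 0 := hp.iterate_dslope_fslope_ne_zero hp0
    have hHd : Differentiable ℂ H := by
      have : ∀ k, Differentiable ℂ ((Function.swap dslope c)^[k] G) := by
        intro k
        induction k with
        | zero => exact hd
        | succ k ihk =>
          rw [Function.iterate_succ_apply', ← differentiableOn_univ]
          exact (Complex.differentiableOn_dslope univ_mem).2 ihk.differentiableOn
      exact this _
    have hzeros : {z | H z = 0} = {z | G z = 0} \ {c} := by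
      ext z
      simp only [Set.mem_ofPred_eq, Set.mem_sdiff, Set.mem_singleton_iff]
      constructor
      · intro h
        refine ⟨by rw [hGH, h, mul_zero], ?_⟩
        rintro rfl
        exact hHc h
      · rintro ⟨h, hzc⟩
        rw [hGH] at h
        exact (mul_eq_zero.1 h).resolve_left (pow_ne_zero _ (sub_ne_zero.2 hzc))
    obtain ⟨M, hM⟩ := (isCompact_closedBall c 1).exists_bound_of_continuousOn
      hHd.continuous.continuousOn
    have hHgr : ∀ ε > 0, ∃ C : ℝ, ∀ z, ‖H z‖ ≤ C * Real.exp (ε * ‖z‖) := by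
      intro ε hε
      obtain ⟨C, hC⟩ := hgr ε hε
      have hC0 : 0 ≤ C := by simpa using (norm_nonneg _).trans (hC 0)
      have hM0 : 0 ≤ M := (norm_nonneg _).trans (hM c (by simp))
      refine ⟨C + M, fun z => ?_⟩
      by_cases hzc : z ∈ Metric.closedBall c 1
      · have h1 : 1 ≤ Real.exp (ε * ‖z‖) := Real.one_le_exp (by positivity)
        have := hM z hzc
        nlinarith
      · have h1 : 1 ≤ ‖z - c‖ := by
          rw [Metric.mem_closedBall, dist_eq_norm] at hzc
          linarith
        have h2 : ‖H z‖ ≤ ‖G z‖ := by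
          rw [hGH z, norm_mul, norm_pow]
          exact le_mul_of_one_le_left (norm_nonneg _) (one_le_pow₀ h1)
        have := hC z
        have h3 := Real.exp_pos (ε * ‖z‖)
        nlinarith
    obtain ⟨C, N, hCN⟩ := ih H hHd (hzeros ▸ hfin.subset Set.sdiff_subset)
      (by rw [hzeros, Set.ncard_sdiff_singleton_of_mem hc, hcard]; simp) hHgr
    have hC0 : 0 ≤ C := by simpa using (norm_nonneg _).trans (hCN 0)
    refine ⟨(1 + ‖c‖) ^ p.order * C, p.order + N, fun z => ?_⟩
    have h1 : ‖z - c‖ ≤ (1 + ‖c‖) * (1 + ‖z‖) := by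
      have := norm_sub_le z c
      nlinarith [norm_nonneg z, norm_nonneg c]
    calc ‖G z‖ = ‖z - c‖ ^ p.order * ‖H z‖ := by rw [hGH z, norm_mul, norm_pow]
      _ ≤ ((1 + ‖c‖) * (1 + ‖z‖)) ^ p.order * (C * (1 + ‖z‖) ^ N) := by
        gcongr
        exact hCN z
      _ = _ := by rw [mul_pow, pow_add]; ring

lemma countable_zeros {G : ℂ → ℂ} (hd : Differentiable ℂ G) {x : ℂ} (hx : G x ≠ 0) :
    {z | G z = 0}.Countable := by
  have h1 : AnalyticOnNhd ℂ G Set.univ := fun z _ => hd.analyticAt z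
  have h2 := h1.preimage_zero_mem_codiscrete hx
  have h3 : IsDiscrete {z | G z = 0} := by
    have h4 : {z | G z = 0}ᶜ ∈ codiscreteWithin (Set.univ : Set ℂ) := h2
    simpa using isDiscrete_of_codiscreteWithin h4
  exact (HereditarilyLindelofSpace.isLindelof _).countable_of_isDiscrete h3

/-! ### Solutions of the recurrence and their Wronskians -/

/-- The two families of solutions of the three-term recurrence: `true` stands for the
orthonormal polynomials `pₖ`, `false` for the second-kind polynomials `qₖ`. -/
def sol (S : JacobiSetup) : Bool → ℕ → ℂ → ℂ
  | true => S.p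
  | false => S.q

/-- The initial Wronskians of the families in `sol`: `-1` for `(p, q)`, `1` for `(q, p)` and `0`
on the diagonal. -/
def kap : Bool → Bool → ℂ
  | true, false => -1
  | false, true => 1
  | true, true => 0
  | false, false => 0

/-- The four Nevanlinna functions at once: `(false, false)`, `(true, false)`, `(false, true)`,
`(true, true)` give `A`, `B`, `C`, `D`. -/
def nev (S : JacobiSetup) (s t : Bool) (u v : ℂ) : ℂ :=
  kap s t + (u - v) * ∑' k, sol S s k u * sol S t k v

/-- The discrete Wronskian `aₙ (fₙ₊₁ gₙ - fₙ gₙ₊₁)` of the solutions at `u` and at `v`. -/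
def wron (S : JacobiSetup) (n : ℕ) (s t : Bool) (u v : ℂ) : ℂ :=
  (S.a n : ℂ) * (sol S s (n + 1) u * sol S t n v - sol S s n u * sol S t (n + 1) v)

lemma a_ne (S : JacobiSetup) (n : ℕ) : (S.a n : ℂ) ≠ 0 :=
  Complex.ofReal_ne_zero.2 (S.ha n).ne'

lemma sol_rec (S : JacobiSetup) (s : Bool) (n : ℕ) (z : ℂ) : z * sol S s (n + 1) z =
    (S.a (n + 1) : ℂ) * sol S s (n + 2) z + (S.b (n + 1) : ℂ) * sol S s (n + 1) z +
      (S.a n : ℂ) * sol S s n z := by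
  cases s
  · exact S.hrecq n z
  · exact S.hrecp n z

lemma sol_add_two (S : JacobiSetup) (s : Bool) (n : ℕ) (z : ℂ) : sol S s (n + 2) z =
    ((S.a (n + 1))⁻¹ : ℂ) *
      ((z - (S.b (n + 1) : ℂ)) * sol S s (n + 1) z + (-(S.a n) : ℂ) * sol S s n z) := by
  have h := a_ne S (n + 1)
  rw [eq_inv_mul_iff_mul_eq₀ h]
  linear_combination -sol_rec S s n z

/-- Conjugation symmetry: the polynomials have real coefficients. -/
lemma sol_conj (S : JacobiSetup) (s : Bool) (n : ℕ) (z : ℂ) :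
    sol S s n (starRingEnd ℂ z) = starRingEnd ℂ (sol S s n z) := by
  induction n using Nat.twoStepInduction with
  | zero => cases s <;> simp [sol, S.hp0, S.hq0]
  | one => cases s <;> simp [sol, S.hp1, S.hq1]
  | more n h0 h1 => rw [sol_add_two, sol_add_two, h0, h1]; simp

lemma sol_summable (S : JacobiSetup) (s : Bool) (z : ℂ) :
    Summable fun k => ‖sol S s k z‖ ^ 2 := by
  cases s
  · exact (S.indet z).of_nonneg_of_le (fun _ => by positivity)
      (fun k => by simp only [sol]; linarith [sq_nonneg ‖S.p k z‖])
  · exact (S.indet z).of_nonneg_of_le (fun _ => by positivity)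
      (fun k => by simp only [sol]; linarith [sq_nonneg ‖S.q k z‖])

lemma sol_mul_summable (S : JacobiSetup) (s t : Bool) (u v : ℂ) :
    Summable fun k => sol S s k u * sol S t k v := by
  refine Summable.of_norm_bounded ((sol_summable S s u).add (sol_summable S t v)) fun k => ?_
  rw [norm_mul]
  nlinarith [sq_nonneg (‖sol S s k u‖ - ‖sol S t k v‖), sq_nonneg ‖sol S s k u‖,
    sq_nonneg ‖sol S t k v‖]

/-- The Christoffel–Darboux formula. -/
lemma wron_eq (S : JacobiSetup) (n : ℕ) (s t : Bool) (u v : ℂ) : wron S n s t u v =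
    kap s t + (u - v) * ∑ k ∈ Finset.range (n + 1), sol S s k u * sol S t k v := by
  induction n with
  | zero =>
    have h := a_ne S 0
    cases s <;> cases t <;> simp [wron, kap, sol, S.hp0, S.hq0, S.hp1, S.hq1] <;> field_simp
    ring
  | succ n ih =>
    rw [Finset.sum_range_succ, mul_add, ← add_assoc, ← ih]
    simp only [wron]
    linear_combination (-sol S t (n + 1) v) * sol_rec S s n u +
      (sol S s (n + 1) u) * sol_rec S t n v

lemma wron_succ (S : JacobiSetup) (n : ℕ) (s t : Bool) (u v : ℂ) : wron S (n + 1) s t u v =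
    wron S n s t u v + (u - v) * (sol S s (n + 1) u * sol S t (n + 1) v) := by
  rw [wron_eq, wron_eq, Finset.sum_range_succ _ (n + 1)]
  ring

lemma wron_tendsto (S : JacobiSetup) (s t : Bool) (u v : ℂ) :
    Tendsto (fun n => wron S n s t u v) atTop (𝓝 (nev S s t u v)) := by
  simp only [wron_eq, nev]
  exact (((sol_mul_summable S s t u v).hasSum.tendsto_sum_nat.comp
    (tendsto_add_atTop_nat 1)).const_mul _).const_add _

/-- The Plücker relation for the `2 × 2` minors of a `2 × 4` matrix, passed to the limit from
the Wronskians. -/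
lemma nev_plucker (S : JacobiSetup) (s₁ s₂ s₃ s₄ : Bool) (z₁ z₂ z₃ z₄ : ℂ) :
    nev S s₁ s₂ z₁ z₂ * nev S s₃ s₄ z₃ z₄ - nev S s₁ s₃ z₁ z₃ * nev S s₂ s₄ z₂ z₄ +
      nev S s₁ s₄ z₁ z₄ * nev S s₂ s₃ z₂ z₃ = 0 := by
  have h := (((wron_tendsto S s₁ s₂ z₁ z₂).mul (wron_tendsto S s₃ s₄ z₃ z₄)).sub
    ((wron_tendsto S s₁ s₃ z₁ z₃).mul (wron_tendsto S s₂ s₄ z₂ z₄))).add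
    ((wron_tendsto S s₁ s₄ z₁ z₄).mul (wron_tendsto S s₂ s₃ z₂ z₃))
  refine tendsto_nhds_unique (h.congr fun n => ?_) tendsto_const_nhds
  simp only [wron]
  ring

lemma nev_antisymm (S : JacobiSetup) (s t : Bool) (u v : ℂ) :
    nev S t s v u = -nev S s t u v := by
  refine tendsto_nhds_unique (wron_tendsto S t s v u)
    ((wron_tendsto S s t u v).neg.congr fun n => ?_)
  simp only [wron]
  ring

lemma nev_conj (S : JacobiSetup) (s t : Bool) (u v : ℂ) :
    nev S s t (starRingEnd ℂ u) (starRingEnd ℂ v) = starRingEnd ℂ (nev S s t u v) := by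
  have h := (Complex.continuous_conj.tendsto _).comp (wron_tendsto S s t u v)
  refine tendsto_nhds_unique (wron_tendsto S s t _ _) (h.congr fun n => ?_)
  simp only [wron, Function.comp, sol_conj, map_mul, map_sub, Complex.conj_ofReal]

lemma nev_self (S : JacobiSetup) (s t : Bool) (u : ℂ) : nev S s t u u = kap s t := by
  simp [nev]

/-- The squared `ℓ²` norm of a solution. -/
def sqn (S : JacobiSetup) (s : Bool) (u : ℂ) : ℝ := ∑' k, ‖sol S s k u‖ ^ 2

lemma le_sqn (S : JacobiSetup) (s : Bool) (u : ℂ) (k : ℕ) : ‖sol S s k u‖ ^ 2 ≤ sqn S s u :=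
  (sol_summable S s u).le_tsum k fun _ _ => by positivity

lemma exists_sqn_lower (S : JacobiSetup) (s : Bool) : ∃ m > 0, ∀ u, m ^ 2 ≤ sqn S s u := by
  cases s
  · refine ⟨(S.a 0)⁻¹, inv_pos.2 (S.ha 0), fun u => ?_⟩
    have := le_sqn S false u 1
    simpa [sol, S.hq1] using this
  · refine ⟨1, one_pos, fun u => ?_⟩
    have := le_sqn S true u 0
    simpa [sol, S.hp0] using this

lemma sqn_pos (S : JacobiSetup) (s : Bool) (u : ℂ) : 0 < sqn S s u := by
  obtain ⟨m, hm, h⟩ := exists_sqn_lower S s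
  exact (pow_pos hm 2).trans_le (h u)

lemma nev_conj_right (S : JacobiSetup) (s : Bool) (u : ℂ) :
    nev S s s u (starRingEnd ℂ u) = 2 * Complex.I * (u.im * sqn S s u : ℝ) := by
  have h : ∀ k, sol S s k u * sol S s k (starRingEnd ℂ u) = ((‖sol S s k u‖ ^ 2 : ℝ) : ℂ) := by
    intro k
    rw [sol_conj, Complex.mul_conj, Complex.normSq_eq_norm_sq]
  have hk : kap s s = 0 := by cases s <;> rfl
  simp only [nev, h, hk, zero_add]
  rw [← Complex.ofReal_tsum, Complex.sub_conj, ← sqn]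
  push_cast
  ring

/-! ### Location of the zeros -/

/-- The Plücker relation for the solutions at `u`, `v`, `ū`, `v̄`. -/
lemma norm_nev_sq (S : JacobiSetup) (s t : Bool) (u v : ℂ) :
    ‖nev S s t u v‖ ^ 2 + 4 * (u.im * v.im) * (sqn S s u * sqn S t v) =
      ‖nev S s t u (starRingEnd ℂ v)‖ ^ 2 := by
  have h := nev_plucker S s t s t u v (starRingEnd ℂ u) (starRingEnd ℂ v)
  have h2 : nev S t s v (starRingEnd ℂ u) =
      -starRingEnd ℂ (nev S s t u (starRingEnd ℂ v)) := by
    rw [nev_antisymm S s t, ← nev_conj, Complex.conj_conj]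
  rw [nev_conj, nev_conj_right, nev_conj_right, h2, mul_neg, Complex.mul_conj, Complex.mul_conj,
    Complex.normSq_eq_norm_sq, Complex.normSq_eq_norm_sq] at h
  have h3 : ((‖nev S s t u v‖ ^ 2 + 4 * (u.im * v.im) * (sqn S s u * sqn S t v) -
      ‖nev S s t u (starRingEnd ℂ v)‖ ^ 2 : ℝ) : ℂ) = 0 := by
    rw [← h]
    push_cast
    linear_combination (4 * (u.im * v.im * (sqn S s u * sqn S t v)) : ℂ) * Complex.I_sq
  have := Complex.ofReal_eq_zero.1 h3
  linarith

/-- The Plücker relation for the solution at `u`, its conjugate, and the two basic solutions at a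
real point `v`, whose Wronskian is `±1`. -/
lemma im_mul_sqn_le (S : JacobiSetup) (s t : Bool) (u v : ℂ) (hv : v.im = 0) :
    |u.im| * sqn S s u ≤ ‖nev S s t u v‖ * ‖nev S s (!t) u v‖ := by
  have hvc : starRingEnd ℂ v = v := Complex.conj_eq_iff_im.2 hv
  have hc : ∀ t, nev S s t (starRingEnd ℂ u) v = starRingEnd ℂ (nev S s t u v) := by
    intro t
    rw [← nev_conj, hvc]
  have h := nev_plucker S s s t (!t) u (starRingEnd ℂ u) v v
  rw [nev_conj_right, nev_self, hc, hc] at h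
  have h1 : ‖kap t (!t)‖ = 1 := by cases t <;> simp [kap]
  have h2 : 2 * Complex.I * ((u.im * sqn S s u : ℝ) : ℂ) * kap t (!t) =
      nev S s t u v * starRingEnd ℂ (nev S s (!t) u v) -
      nev S s (!t) u v * starRingEnd ℂ (nev S s t u v) := by linear_combination h
  have h3 := congrArg norm h2
  rw [norm_mul, norm_mul, norm_mul, h1, Complex.norm_I, Complex.norm_real, Complex.norm_ofNat,
    Real.norm_eq_abs, abs_mul, abs_of_pos (sqn_pos S s u)] at h3
  have h4 := norm_sub_le (nev S s t u v * starRingEnd ℂ (nev S s (!t) u v))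
    (nev S s (!t) u v * starRingEnd ℂ (nev S s t u v))
  rw [norm_mul, norm_mul, Complex.norm_conj, Complex.norm_conj] at h4
  linarith

lemma im_eq_zero_of_nev (S : JacobiSetup) (s t : Bool) {u v : ℂ} (hv : v.im = 0)
    (h : nev S s t u v = 0) : u.im = 0 := by
  have h1 := im_mul_sqn_le S s t u v hv
  rw [h, norm_zero, zero_mul] at h1
  by_contra hne
  have := mul_pos (abs_pos.2 hne) (sqn_pos S s u)
  linarith

lemma im_mul_im_pos_of_nev (S : JacobiSetup) (s t : Bool) {u v : ℂ} (hv : v.im ≠ 0)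
    (h : nev S s t u v = 0) : 0 < u.im * v.im := by
  have hu : u.im ≠ 0 := by
    intro hu
    exact hv (im_eq_zero_of_nev S t s hu (by rw [nev_antisymm S s t, h, neg_zero]))
  have h1 := norm_nev_sq S s t u v
  rw [h, norm_zero] at h1
  have h2 := mul_pos (sqn_pos S s u) (sqn_pos S t v)
  refine lt_of_le_of_ne ?_ (mul_ne_zero hu hv).symm
  by_contra hneg
  push Not at hneg
  nlinarith [sq_nonneg ‖nev S s t u (starRingEnd ℂ v)‖]

/-! ### Growth from below along an imaginary half-axis -/

lemma norm_nev_le (S : JacobiSetup) (s t : Bool) (u v : ℂ) :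
    ‖nev S s t u v‖ ≤ 1 + ‖u - v‖ * (√(sqn S s u) * (1 + sqn S t v)) := by
  have hk : ‖kap s t‖ ≤ 1 := by cases s <;> cases t <;> simp [kap]
  set m := √(sqn S s u) with hm
  have hmp : 0 < m := Real.sqrt_pos.2 (sqn_pos S s u)
  have hmm : m ^ 2 = sqn S s u := Real.sq_sqrt (sqn_pos S s u).le
  have hsum : Summable fun k => ‖sol S s k u‖ ^ 2 * m⁻¹ + m * ‖sol S t k v‖ ^ 2 :=
    ((sol_summable S s u).mul_right _).add ((sol_summable S t v).mul_left _)
  have hb : ‖∑' k, sol S s k u * sol S t k v‖ ≤ m * (1 + sqn S t v) := by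
    have h1 : ∀ k, ‖sol S s k u * sol S t k v‖ ≤
        ‖sol S s k u‖ ^ 2 * m⁻¹ + m * ‖sol S t k v‖ ^ 2 := by
      intro k
      rw [norm_mul]
      set x := ‖sol S s k u‖
      set y := ‖sol S t k v‖
      have hx : 0 ≤ x := norm_nonneg _
      have hy : 0 ≤ y := norm_nonneg _
      have e : x ^ 2 * m⁻¹ + m * y ^ 2 = (x ^ 2 + (m * y) ^ 2) / m := by field_simp
      rw [e, le_div_iff₀ hmp]
      nlinarith [sq_nonneg (x - m * y), sq_nonneg x, sq_nonneg (m * y)]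
    refine (tsum_of_norm_bounded hsum.hasSum h1).trans (le_of_eq ?_)
    rw [((sol_summable S s u).mul_right _).tsum_add ((sol_summable S t v).mul_left _),
      tsum_mul_right, tsum_mul_left]
    change sqn S s u * m⁻¹ + m * sqn S t v = _
    rw [← hmm]
    field_simp
  calc ‖nev S s t u v‖ ≤ ‖kap s t‖ + ‖(u - v) * ∑' k, sol S s k u * sol S t k v‖ :=
        norm_add_le _ _
    _ ≤ _ := by
      rw [norm_mul]
      gcongr

/-- On one of the two imaginary half-axes, `|F(·, v)|` dominates a fixed multiple of every
polynomial of the family in its first variable. -/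
lemma exists_lower (S : JacobiSetup) (s t : Bool) (v : ℂ) : ∃ σ : ℂ, ‖σ‖ = 1 ∧ ∃ K : ℝ,
    ∀ y : ℝ, 1 ≤ y → ∀ k, ‖sol S s k (σ * y)‖ ≤ K * ‖nev S s t (σ * y) v‖ := by
  by_cases hv : v.im = 0
  · obtain ⟨m₀, hm₀, hm⟩ := exists_sqn_lower S s
    refine ⟨Complex.I, Complex.norm_I, m₀⁻¹ + (1 + ‖v‖) * (1 + sqn S (!t) v), fun y hy k => ?_⟩
    set u := Complex.I * y with hu
    set m := √(sqn S s u) with hmdef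
    have hmp : 0 < m := Real.sqrt_pos.2 (sqn_pos S s u)
    have hmm : m ^ 2 = sqn S s u := Real.sq_sqrt (sqn_pos S s u).le
    have hm1 : m₀ ≤ m := Real.le_sqrt_of_sq_le (hm u)
    have hk : ‖sol S s k u‖ ≤ m := Real.le_sqrt_of_sq_le (le_sqn S s u k)
    refine hk.trans ?_
    have h1 := im_mul_sqn_le S s t u v hv
    have hui : u.im = y := by simp [hu]
    rw [hui, abs_of_pos (by linarith), ← hmm] at h1
    have h2 := norm_nev_le S s (!t) u v
    have h3 : ‖u - v‖ ≤ y * (1 + ‖v‖) := by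
      have h4 : ‖u‖ = y := by simp [hu, abs_of_pos (zero_lt_one.trans_le hy)]
      have := norm_sub_le u v
      nlinarith [norm_nonneg v]
    have hs := sqn_pos S (!t) v
    have h5 : ‖nev S s (!t) u v‖ ≤ y * m * (m₀⁻¹ + (1 + ‖v‖) * (1 + sqn S (!t) v)) := by
      have h6 : 1 ≤ y * m * m₀⁻¹ := by
        rw [← div_eq_mul_inv, le_div_iff₀ hm₀]
        nlinarith
      calc _ ≤ 1 + ‖u - v‖ * (m * (1 + sqn S (!t) v)) := h2
        _ ≤ y * m * m₀⁻¹ + y * (1 + ‖v‖) * (m * (1 + sqn S (!t) v)) := by gcongr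
        _ = _ := by ring
    have hym : 0 < y * m := by positivity
    have h7 : y * m * m ≤
        y * m * ((m₀⁻¹ + (1 + ‖v‖) * (1 + sqn S (!t) v)) * ‖nev S s t u v‖) := by
      calc y * m * m = y * m ^ 2 := by ring
        _ ≤ ‖nev S s t u v‖ * ‖nev S s (!t) u v‖ := h1
        _ ≤ ‖nev S s t u v‖ * (y * m * (m₀⁻¹ + (1 + ‖v‖) * (1 + sqn S (!t) v))) := by gcongr
        _ = _ := by ring
    exact le_of_mul_le_mul_left h7 hym
  ·
    -- The half-axis lies in the half-plane opposite to that of `v`.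
    obtain ⟨σ, hσ, hσv⟩ : ∃ σ : ℂ, ‖σ‖ = 1 ∧ ∀ y : ℝ, (σ * y).im * v.im = -(y * |v.im|) := by
      rcases lt_or_gt_of_ne hv with h | h
      · exact ⟨Complex.I, Complex.norm_I, fun y => by simp [abs_of_neg h]⟩
      · exact ⟨-Complex.I, by simp, fun y => by simp [abs_of_pos h]⟩
    have hvp : 0 < |v.im| := abs_pos.2 hv
    have hs := sqn_pos S t v
    refine ⟨σ, hσ, (√(4 * |v.im| * sqn S t v))⁻¹, fun y hy k => ?_⟩
    have h1 := norm_nev_sq S s t (σ * y) v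
    rw [hσv] at h1
    have h2 := le_sqn S s (σ * y) k
    have hc : 0 < √(4 * |v.im| * sqn S t v) := Real.sqrt_pos.2 (by positivity)
    rw [le_inv_mul_iff₀ hc]
    refine abs_le_of_sq_le_sq' ?_ (norm_nonneg _) |>.2
    rw [mul_pow, Real.sq_sqrt (by positivity)]
    have h3 : 4 * |v.im| * sqn S t v * ‖sol S s k (σ * y)‖ ^ 2 ≤
        4 * |v.im| * sqn S t v * (y * sqn S s (σ * y)) := by
      gcongr
      nlinarith [sqn_pos S s (σ * y)]
    nlinarith [sq_nonneg ‖nev S s t (σ * y) (starRingEnd ℂ v)‖]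

/-- The `(k+1)`-st polynomial of either family grows at least like `‖u‖ ^ k` at infinity; that it
eventually dominates its predecessor is what carries the induction. -/
lemma sol_lower (S : JacobiSetup) (s : Bool) (k : ℕ) : ∃ c > 0, ∃ Y : ℝ, ∀ u : ℂ, Y ≤ ‖u‖ →
    ‖sol S s k u‖ ≤ ‖sol S s (k + 1) u‖ ∧ c * ‖u‖ ^ k ≤ ‖sol S s (k + 1) u‖ := by
  induction k with
  | zero =>
    have ha := S.ha 0
    cases s
    · refine ⟨(S.a 0)⁻¹, by positivity, 0, fun u _ => ?_⟩
      simp [sol, S.hq0, S.hq1, abs_of_pos ha, ha.le]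
    · refine ⟨1, one_pos, |S.b 0| + S.a 0, fun u hu => ?_⟩
      have h1 : S.a 0 ≤ ‖u - (S.b 0 : ℂ)‖ := by
        have := norm_sub_norm_le u (S.b 0 : ℂ)
        rw [Complex.norm_real, Real.norm_eq_abs] at this
        linarith
      simp [sol, S.hp0, S.hp1, abs_of_pos ha, one_le_div ha, h1]
  | succ k ih =>
    obtain ⟨c, hc, Y, hY⟩ := ih
    have ha := S.ha k
    have ha' := S.ha (k + 1)
    refine ⟨c / (2 * S.a (k + 1)), by positivity,
      max Y (2 * (|S.b (k + 1)| + S.a k + S.a (k + 1))), fun u hu => ?_⟩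
    obtain ⟨h1, h2⟩ := hY u ((le_max_left _ _).trans hu)
    have h3 := (le_max_right _ _).trans hu
    have hb := abs_nonneg (S.b (k + 1))
    set x := ‖sol S s (k + 1) u‖ with hx
    have hx0 : 0 ≤ x := norm_nonneg _
    have h4 : ‖u‖ / 2 * x ≤ S.a (k + 1) * ‖sol S s (k + 2) u‖ := by
      have e : (S.a (k + 1) : ℂ) * sol S s (k + 2) u =
          (u - (S.b (k + 1) : ℂ)) * sol S s (k + 1) u - (S.a k : ℂ) * sol S s k u := by
        linear_combination -sol_rec S s k u
      have e2 := norm_sub_norm_le ((u - (S.b (k + 1) : ℂ)) * sol S s (k + 1) u)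
        ((S.a k : ℂ) * sol S s k u)
      rw [← e, norm_mul, norm_mul, norm_mul, Complex.norm_real, Complex.norm_real,
        Real.norm_eq_abs, Real.norm_eq_abs, abs_of_pos ha, abs_of_pos ha', ← hx] at e2
      have e3 : ‖u‖ - |S.b (k + 1)| ≤ ‖u - (S.b (k + 1) : ℂ)‖ := by
        have := norm_sub_norm_le u (S.b (k + 1) : ℂ)
        rwa [Complex.norm_real, Real.norm_eq_abs] at this
      have e4 : (‖u‖ - |S.b (k + 1)|) * x ≤ ‖u - (S.b (k + 1) : ℂ)‖ * x := by gcongr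
      have e5 : S.a k * ‖sol S s k u‖ ≤ S.a k * x := by gcongr
      have e6 : 0 ≤ (‖u‖ / 2 - |S.b (k + 1)| - S.a k) * x :=
        mul_nonneg (by linarith) hx0
      nlinarith
    constructor
    · have h5 : S.a (k + 1) * x ≤ S.a (k + 1) * ‖sol S s (k + 2) u‖ := by
        refine le_trans ?_ h4
        gcongr
        linarith
      exact le_of_mul_le_mul_left h5 ha'
    · rw [div_mul_eq_mul_div, div_le_iff₀ (by positivity), pow_succ]
      have h6 : c * ‖u‖ ^ k * ‖u‖ ≤ x * ‖u‖ := by gcongr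
      nlinarith

/-! ### Growth from above -/

lemma sol_differentiable (S : JacobiSetup) (s : Bool) (n : ℕ) : Differentiable ℂ (sol S s n) := by
  induction n using Nat.twoStepInduction with
  | zero =>
    cases s
    · rw [show sol S false 0 = fun _ => 0 from funext S.hq0]; fun_prop
    · rw [show sol S true 0 = fun _ => 1 from funext S.hp0]; fun_prop
  | one =>
    cases s
    · rw [show sol S false 1 = fun _ => 1 / (S.a 0 : ℂ) from funext S.hq1]; fun_prop
    · rw [show sol S true 1 = fun z => (z - (S.b 0 : ℂ)) / (S.a 0 : ℂ) from funext S.hp1]; fun_prop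
  | more n h0 h1 =>
    rw [show sol S s (n + 2) = _ from funext (sol_add_two S s n)]
    fun_prop

/-- Minimal exponential type: growth `O(exp (ε ‖z‖))` for every `ε > 0`. -/
def MinType (h : ℂ → ℂ) : Prop := ∀ ε > 0, ∃ C : ℝ, ∀ z, ‖h z‖ ≤ C * Real.exp (ε * ‖z‖)

lemma minType_const (c : ℂ) : MinType fun _ => c := fun ε hε =>
  ⟨‖c‖, fun z => le_mul_of_one_le_right (norm_nonneg _) (Real.one_le_exp (by positivity))⟩

lemma minType_id : MinType fun z => z := fun ε hε => ⟨ε⁻¹, fun z => by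
  have := Real.add_one_le_exp (ε * ‖z‖)
  rw [le_inv_mul_iff₀ hε]
  linarith⟩

lemma MinType.add {f g : ℂ → ℂ} (hf : MinType f) (hg : MinType g) :
    MinType fun z => f z + g z := fun ε hε => by
  obtain ⟨C, hC⟩ := hf ε hε
  obtain ⟨D, hD⟩ := hg ε hε
  exact ⟨C + D, fun z => (norm_add_le _ _).trans (by linarith [hC z, hD z])⟩

lemma MinType.mul {f g : ℂ → ℂ} (hf : MinType f) (hg : MinType g) :
    MinType fun z => f z * g z := fun ε hε => by
  obtain ⟨C, hC⟩ := hf (ε / 2) (half_pos hε)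
  obtain ⟨D, hD⟩ := hg (ε / 2) (half_pos hε)
  refine ⟨C * D, fun z => ?_⟩
  rw [norm_mul]
  calc _ ≤ (C * Real.exp (ε / 2 * ‖z‖)) * (D * Real.exp (ε / 2 * ‖z‖)) :=
        mul_le_mul (hC z) (hD z) (norm_nonneg _) ((norm_nonneg _).trans (hC z))
    _ = C * D * Real.exp (ε * ‖z‖) := by
      rw [mul_mul_mul_comm, ← Real.exp_add]
      ring_nf

lemma minType_sol (S : JacobiSetup) (s : Bool) (n : ℕ) : MinType (sol S s n) := by
  induction n using Nat.twoStepInduction with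
  | zero =>
    cases s
    · rw [show sol S false 0 = fun _ => 0 from funext S.hq0]; exact minType_const _
    · rw [show sol S true 0 = fun _ => 1 from funext S.hp0]; exact minType_const _
  | one =>
    cases s
    · rw [show sol S false 1 = fun _ => 1 / (S.a 0 : ℂ) from funext S.hq1]; exact minType_const _
    · rw [show sol S true 1 = fun z => (z + -(S.b 0 : ℂ)) * (S.a 0 : ℂ)⁻¹ from
        funext fun z => by rw [← sub_eq_add_neg, ← div_eq_mul_inv]; exact S.hp1 z]
      exact (minType_id.add (minType_const _)).mul (minType_const _)
  | more n h0 h1 =>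
    rw [show sol S s (n + 2) = fun z => ((S.a (n + 1))⁻¹ : ℂ) *
      ((z + -(S.b (n + 1) : ℂ)) * sol S s (n + 1) z + (-(S.a n) : ℂ) * sol S s n z) from
      funext fun z => by rw [sol_add_two, sub_eq_add_neg]]
    exact (minType_const _).mul (((minType_id.add (minType_const _)).mul h1).add
      ((minType_const _).mul h0))

lemma minType_wron (S : JacobiSetup) (n : ℕ) (s t : Bool) (v : ℂ) :
    MinType fun u => wron S n s t u v := by
  have h := (minType_const (S.a n)).mul (((minType_sol S s (n + 1)).mul
    (minType_const (sol S t n v))).add ((minType_sol S s n).mul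
    (minType_const (-sol S t (n + 1) v))))
  convert h using 2 with u
  simp only [wron]
  ring

/-- The size of the pair of Wronskians with the basic solutions at `v`. -/
def energy (S : JacobiSetup) (s : Bool) (v : ℂ) (n : ℕ) (u : ℂ) : ℝ :=
  ‖wron S n s true u v‖ + ‖wron S n s false u v‖

/-- The summable weights `|pₙ(v)|² + |qₙ(v)|²`. -/
def weight (S : JacobiSetup) (v : ℂ) (n : ℕ) : ℝ := ‖sol S true n v‖ ^ 2 + ‖sol S false n v‖ ^ 2

lemma weight_nonneg (S : JacobiSetup) (v : ℂ) (n : ℕ) : 0 ≤ weight S v n := by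
  unfold weight; positivity

lemma energy_nonneg (S : JacobiSetup) (s : Bool) (v : ℂ) (n : ℕ) (u : ℂ) :
    0 ≤ energy S s v n u := by
  unfold energy; positivity

lemma weight_summable (S : JacobiSetup) (v : ℂ) : Summable (weight S v) := S.indet v

/-- Variation of parameters: the solution at `u` is recovered from its Wronskians with the two
basic solutions at `v`. -/
lemma norm_sol_mul_le (S : JacobiSetup) (s : Bool) (u v : ℂ) (n : ℕ) :
    ‖sol S s (n + 1) u‖ * (‖sol S true (n + 1) v‖ + ‖sol S false (n + 1) v‖) ≤
      2 * weight S v (n + 1) * energy S s v n u := by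
  have h0 : wron S n true false v v = -1 := by rw [wron_eq]; simp [kap]
  have h1 : sol S s (n + 1) u = sol S false (n + 1) v * wron S n s true u v -
      sol S true (n + 1) v * wron S n s false u v := by
    simp only [wron] at h0 ⊢
    linear_combination (sol S s (n + 1) u) * h0
  have h2 : ‖sol S s (n + 1) u‖ ≤ ‖sol S false (n + 1) v‖ * ‖wron S n s true u v‖ +
      ‖sol S true (n + 1) v‖ * ‖wron S n s false u v‖ := by
    rw [← norm_mul, ← norm_mul, h1]
    exact norm_sub_le _ _
  unfold weight energy
  set x := ‖sol S true (n + 1) v‖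
  set y := ‖sol S false (n + 1) v‖
  set X := ‖wron S n s true u v‖
  set Y := ‖wron S n s false u v‖
  have hx : 0 ≤ x := norm_nonneg _
  have hy : 0 ≤ y := norm_nonneg _
  have hX : 0 ≤ X := norm_nonneg _
  have hY : 0 ≤ Y := norm_nonneg _
  calc _ ≤ (y * X + x * Y) * (x + y) := by gcongr
    _ ≤ ((x + y) * (X + Y)) * (x + y) := by
      gcongr
      nlinarith [mul_nonneg hx hX, mul_nonneg hy hY]
    _ = (x + y) ^ 2 * (X + Y) := by ring
    _ ≤ _ := by
      gcongr
      nlinarith [sq_nonneg (x - y)]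

lemma energy_succ (S : JacobiSetup) (s : Bool) (v : ℂ) (n : ℕ) (u : ℂ) :
    energy S s v (n + 1) u ≤
      energy S s v n u * Real.exp (2 * ‖u - v‖ * weight S v (n + 1)) := by
  have h1 := norm_sol_mul_le S s u v n
  have h2 : energy S s v (n + 1) u ≤ energy S s v n u + ‖u - v‖ *
      (‖sol S s (n + 1) u‖ * (‖sol S true (n + 1) v‖ + ‖sol S false (n + 1) v‖)) := by
    have h3 := norm_add_le (wron S n s true u v)
      ((u - v) * (sol S s (n + 1) u * sol S true (n + 1) v))
    have h4 := norm_add_le (wron S n s false u v)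
      ((u - v) * (sol S s (n + 1) u * sol S false (n + 1) v))
    rw [norm_mul, norm_mul] at h3 h4
    simp only [energy, wron_succ]
    linarith
  have h5 := Real.add_one_le_exp (2 * ‖u - v‖ * weight S v (n + 1))
  calc _ ≤ energy S s v n u + ‖u - v‖ * (2 * weight S v (n + 1) * energy S s v n u) := by
        refine h2.trans ?_
        gcongr
    _ = energy S s v n u * (2 * ‖u - v‖ * weight S v (n + 1) + 1) := by ring
    _ ≤ _ := by
      gcongr
      exact energy_nonneg S s v n u

/-- Discrete Grönwall estimate started at the index `N`. -/
lemma energy_le (S : JacobiSetup) (s : Bool) (v : ℂ) (N m : ℕ) (u : ℂ) :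
    energy S s v (m + N) u ≤
      energy S s v N u * Real.exp (2 * ‖u - v‖ * ∑' k, weight S v (k + (N + 1))) := by
  have hsum : Summable fun k => weight S v (k + (N + 1)) :=
    (summable_nat_add_iff (N + 1)).2 (weight_summable S v)
  have h : energy S s v (m + N) u ≤ energy S s v N u *
      Real.exp (2 * ‖u - v‖ * ∑ k ∈ Finset.range m, weight S v (k + (N + 1))) := by
    induction m with
    | zero => simp
    | succ m ih =>
      rw [show m + 1 + N = (m + N) + 1 by ring, Finset.sum_range_succ, mul_add, Real.exp_add,
        ← mul_assoc, show m + (N + 1) = m + N + 1 by ring]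
      refine (energy_succ S s v (m + N) u).trans ?_
      gcongr
  refine h.trans ?_
  gcongr
  · exact energy_nonneg S s v N u
  · exact hsum.sum_le_tsum _ fun k _ => weight_nonneg S v _

lemma norm_wron_le_energy (S : JacobiSetup) (s t : Bool) (v : ℂ) (n : ℕ) (u : ℂ) :
    ‖wron S n s t u v‖ ≤ energy S s v n u := by
  cases t <;> simp [energy]

lemma minType_nev (S : JacobiSetup) (s t : Bool) (v : ℂ) : MinType fun u => nev S s t u v := by
  intro ε hε
  -- The tail of the weights, hence the exponential factor, is small once `N` is large.
  obtain ⟨N, hN⟩ : ∃ N, ∑' k, weight S v (k + (N + 1)) < ε / 4 :=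
    (((tendsto_sum_nat_add (weight S v)).comp (tendsto_add_atTop_nat 1)).eventually
      (gt_mem_nhds (by positivity : 0 < ε / 4))).exists
  obtain ⟨C, hC⟩ := minType_wron S N s true v (ε / 2) (half_pos hε)
  obtain ⟨D, hD⟩ := minType_wron S N s false v (ε / 2) (half_pos hε)
  refine ⟨(C + D) * Real.exp (ε / 2 * ‖v‖), fun u => ?_⟩
  have h1 : ‖nev S s t u v‖ ≤
      energy S s v N u * Real.exp (2 * ‖u - v‖ * ∑' k, weight S v (k + (N + 1))) := by
    refine le_of_tendsto (((wron_tendsto S s t u v).comp (tendsto_add_atTop_nat N)).norm)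
      (Eventually.of_forall fun m => ?_)
    exact (norm_wron_le_energy S s t v _ u).trans (energy_le S s v N m u)
  have h2 : energy S s v N u ≤ (C + D) * Real.exp (ε / 2 * ‖u‖) := by
    have h3 := hC u
    have h4 := hD u
    simp only [energy]
    linarith
  have h3 : 2 * ‖u - v‖ * ∑' k, weight S v (k + (N + 1)) ≤ ε / 2 * ‖u‖ + ε / 2 * ‖v‖ := by
    calc _ ≤ 2 * (‖u‖ + ‖v‖) * (ε / 4) := by
          gcongr
          · exact tsum_nonneg fun k => weight_nonneg S v _
          · exact norm_sub_le u v
      _ = _ := by ring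
  calc _ ≤ _ := h1
    _ ≤ (C + D) * Real.exp (ε / 2 * ‖u‖) * Real.exp (ε / 2 * ‖u‖ + ε / 2 * ‖v‖) := by
      gcongr
      exact (energy_nonneg S s v N u).trans h2
    _ = _ := by
      rw [mul_assoc, mul_assoc, ← Real.exp_add, ← Real.exp_add]
      ring_nf

/-- The Grönwall estimate bounds the series defining `nev` locally uniformly in `u`. -/
lemma nev_differentiable (S : JacobiSetup) (s t : Bool) (v : ℂ) :
    Differentiable ℂ fun u => nev S s t u v := by
  suffices h : Differentiable ℂ fun u => ∑' k, sol S s k u * sol S t k v by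
    unfold nev
    fun_prop
  intro u₀
  set R := ‖u₀‖ + 1 with hR
  set T := ∑' k, weight S v (k + (0 + 1)) with hT
  have hT0 : 0 ≤ T := tsum_nonneg fun k => weight_nonneg S v _
  set M := 2 * (2 * (1 + (R + ‖v‖))) * Real.exp (2 * (R + ‖v‖) * T) with hM
  have hR0 : 0 < R := by positivity
  have hd : DifferentiableOn ℂ (fun u => ∑' k, sol S s k u * sol S t k v) (Metric.ball 0 R) := by
    refine Complex.differentiableOn_tsum_of_summable_norm ((weight_summable S v).mul_left M)
      (fun k => ((sol_differentiable S s k).mul_const _).differentiableOn) Metric.isOpen_ball ?_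
    intro k u hu
    have hu' : ‖u‖ ≤ R := by simpa using (Metric.mem_ball.1 hu).le
    have huv : ‖u - v‖ ≤ R + ‖v‖ := (norm_sub_le u v).trans (by gcongr)
    rw [norm_mul]
    have h0 : ∀ s u, ‖sol S s 0 u‖ ≤ 1 := by
      intro s u
      cases s <;> simp [sol, S.hp0, S.hq0]
    cases k with
    | zero =>
      have hw : weight S v 0 = 1 := by simp [weight, sol, S.hp0, S.hq0]
      have h1 : 1 ≤ Real.exp (2 * (R + ‖v‖) * T) := Real.one_le_exp (by positivity)
      have h2 : 1 ≤ M := by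
        rw [hM]
        nlinarith [norm_nonneg v]
      rw [hw, mul_one]
      exact (mul_le_one₀ (h0 s u) (norm_nonneg _) (h0 t v)).trans h2
    | succ n =>
      have h1 := norm_sol_mul_le S s u v n
      have h2 : ‖sol S t (n + 1) v‖ ≤ ‖sol S true (n + 1) v‖ + ‖sol S false (n + 1) v‖ := by
        cases t <;> simp
      have h3 : energy S s v 0 u ≤ 2 * (1 + (R + ‖v‖)) := by
        have h4 : ∀ t, ‖wron S 0 s t u v‖ ≤ 1 + (R + ‖v‖) := by
          intro t
          rw [wron_eq]
          have hk : ‖kap s t‖ ≤ 1 := by cases s <;> cases t <;> simp [kap]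
          refine (norm_add_le _ _).trans ?_
          gcongr
          rw [norm_mul, zero_add, Finset.sum_range_one, norm_mul]
          refine (mul_le_of_le_one_right (norm_nonneg _) ?_).trans huv
          exact mul_le_one₀ (h0 s u) (norm_nonneg _) (h0 t v)
        have := h4 true
        have := h4 false
        unfold energy
        linarith
      have h5 : energy S s v n u ≤ 2 * (1 + (R + ‖v‖)) * Real.exp (2 * (R + ‖v‖) * T) := by
        refine (energy_le S s v 0 n u).trans ?_
        gcongr
      calc _ ≤ ‖sol S s (n + 1) u‖ * (‖sol S true (n + 1) v‖ + ‖sol S false (n + 1) v‖) := by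
            gcongr
        _ ≤ _ := h1
        _ ≤ 2 * weight S v (n + 1) *
            (2 * (1 + (R + ‖v‖)) * Real.exp (2 * (R + ‖v‖) * T)) := by
          gcongr
          have := weight_nonneg S v (n + 1)
          positivity
        _ = _ := by rw [hM]; ring
  exact hd.differentiableAt (Metric.isOpen_ball.mem_nhds (by simp [hR]))

/-! ### The zero sets -/

/-- Finitely many zeros would force polynomial growth, against the growth from below. -/
lemma nev_zeros_infinite (S : JacobiSetup) (s t : Bool) (v : ℂ) :
    {u | nev S s t u v = 0}.Infinite := by
  intro hfin
  obtain ⟨C, N, hCN⟩ := polynomial_growth_of_finite_zeros _ _ (nev_differentiable S s t v) hfin rfl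
    (minType_nev S s t v)
  obtain ⟨σ, hσ, K, hK⟩ := exists_lower S s t v
  obtain ⟨c, hc, Y, hY⟩ := sol_lower S s (N + 1)
  have hC0 : 0 ≤ C := by simpa using (norm_nonneg _).trans (hCN 0)
  have main : ∀ y : ℝ, 1 ≤ y → Y ≤ y → c * y ≤ |K| * C * 2 ^ N := by
    intro y hy hYy
    have hy0 : 0 < y := by linarith
    have hn : ‖σ * (y : ℂ)‖ = y := by simp [hσ, abs_of_pos hy0]
    have h1 := (hY (σ * y) (by rwa [hn])).2
    have h2 := hK y hy (N + 1 + 1)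
    have h3 := hCN (σ * y)
    rw [hn] at h1 h3
    have h4 : c * y ^ (N + 1) ≤ |K| * (C * (2 * y) ^ N) := by
      calc _ ≤ _ := h1
        _ ≤ K * ‖nev S s t (σ * y) v‖ := h2
        _ ≤ |K| * (C * (1 + y) ^ N) := by
          gcongr
          exact le_abs_self K
        _ ≤ _ := by
          gcongr
          linarith
    have h5 : y ^ N * (c * y) ≤ y ^ N * (|K| * C * 2 ^ N) := by
      rw [mul_pow, pow_succ] at h4
      linarith
    exact le_of_mul_le_mul_left h5 (by positivity)
  have h1 : (1 : ℝ) ≤ max (max 1 Y) ((|K| * C * 2 ^ N + 1) / c) :=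
    (le_max_left _ _).trans (le_max_left _ _)
  have h2 := main _ h1 ((le_max_right _ _).trans (le_max_left _ _))
  have h3 := mul_le_mul_of_nonneg_left
    (le_max_right (max 1 Y) ((|K| * C * 2 ^ N + 1) / c)) hc.le
  rw [mul_div_cancel₀ _ hc.ne'] at h3
  linarith

lemma nev_zeros (S : JacobiSetup) (s t : Bool) (v : ℂ) :
    {u : ℂ | nev S s t u v = 0}.Countable ∧ {u : ℂ | nev S s t u v = 0}.Infinite ∧
    (v.im = 0 → ∀ u ∈ {u : ℂ | nev S s t u v = 0}, u.im = 0) ∧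
    (0 < v.im → ∀ u ∈ {u : ℂ | nev S s t u v = 0}, 0 < u.im) ∧
    (v.im < 0 → ∀ u ∈ {u : ℂ | nev S s t u v = 0}, u.im < 0) := by
  have hreal : v.im = 0 → ∀ u, nev S s t u v = 0 → u.im = 0 := fun hv u hu =>
    im_eq_zero_of_nev S s t hv hu
  have hpos : 0 < v.im → ∀ u, nev S s t u v = 0 → 0 < u.im := fun hv u hu =>
    pos_of_mul_pos_left (im_mul_im_pos_of_nev S s t hv.ne' hu) hv.le
  have hneg : v.im < 0 → ∀ u, nev S s t u v = 0 → u.im < 0 := fun hv u hu =>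
    neg_of_mul_pos_left (im_mul_im_pos_of_nev S s t hv.ne hu) hv.le
  refine ⟨?_, nev_zeros_infinite S s t v, hreal, hpos, hneg⟩
  obtain ⟨x, hx⟩ : ∃ x, nev S s t x v ≠ 0 := by
    by_contra! h
    rcases lt_trichotomy v.im 0 with hv | hv | hv
    · simpa using hneg hv 0 (h 0)
    · simpa using hreal hv Complex.I (h _)
    · simpa using hpos hv 0 (h 0)
  exact countable_zeros (nev_differentiable S s t v) hx

/-- For `F` any of the four Nevanlinna functions and `v ∈ ℂ`, the zero set
`Z(F)_v = {u | F(u,v) = 0}` is countably infinite; it is real if `v` is real, and it lies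
in the open upper (resp. lower) half-plane if `v` does. -/
theorem stmt4 (S : JacobiSetup) (F : ℂ → ℂ → ℂ)
    (hF : F = nevA S ∨ F = nevB S ∨ F = nevC S ∨ F = nevD S) (v : ℂ) :
    {u : ℂ | F u v = 0}.Countable ∧ {u : ℂ | F u v = 0}.Infinite ∧
    (v.im = 0 → ∀ u ∈ {u : ℂ | F u v = 0}, u.im = 0) ∧
    (0 < v.im → ∀ u ∈ {u : ℂ | F u v = 0}, 0 < u.im) ∧
    (v.im < 0 → ∀ u ∈ {u : ℂ | F u v = 0}, u.im < 0) := by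
  have hA : nevA S = nev S false false := by
    funext u v
    simp [nevA, nev, kap, sol]
  have hD : nevD S = nev S true true := by
    funext u v
    simp [nevD, nev, kap, sol]
  rcases hF with rfl | rfl | rfl | rfl
  · rw [hA]
    exact nev_zeros S false false v
  · exact nev_zeros S true false v
  · exact nev_zeros S false true v
  · rw [hD]
    exact nev_zeros S true true v
end
end

section
/- Let v ∈ ℝ and let u ∈ ℝ satisfy A(u,v) = 0, u < v, and A(x,v) ≠ 0 for all x in the open interval (u,v). Then C(u,v) is a negative real number. -/
/-!
At real points all values are real. The truncations of `A` and `C` are, by Christoffel–Darboux,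
`2 × 2` minors of consecutive values of `q` and `p`, so the Plücker relation together with
`C(v,v) = 1` gives in the limit `A(x,v) C(u,v) - A(u,v) C(x,v) = A(x,u)` (`pluecker`).
If `A(u,v) = 0`, then `C(u,v) = A(x,u) / A(x,v)` wherever `A(x,v) ≠ 0`. Write
`A(x,y) = (x - y) ⟨q(x), q(y)⟩` with the pairing of `ℓ²`. For `x` slightly larger than `u`,
`⟨q(x), q(u)⟩ > 0` by continuity, so `A(x,u) > 0`; and `⟨q(x), q(v)⟩` is positive at `x = v` and has
no zero in `(u,v)`, so it is positive there and `A(x,v) < 0`. Hence `C(u,v) < 0`.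

The continuity of `x ↦ ⟨q(x), q(v)⟩` (`continuous_pairing`) has to be extracted from pointwise
summability. The variation of constants formula `qRe_sub` expresses `q(x) - q(y)` through `q(y)` and
`p(y)` with coefficients `O(|x - y| ‖q(x)‖)`. Since `‖q(x)‖` is finite, it can be absorbed for `x`
near `y`, which makes `‖q(x) - q(y)‖ = O(|x - y|)`.
-/


open Filter Topology MeasureTheory

noncomputable section

/-! ### Real values of the polynomials -/

/-- Real values of `qₙ` at real points (see `q_ofReal`). -/
def qRe (S : JacobiSetup) (n : ℕ) (x : ℝ) : ℝ := (S.q n (x : ℂ)).re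

/-- Real values of `pₙ` at real points (see `p_ofReal`). -/
def pRe (S : JacobiSetup) (n : ℕ) (x : ℝ) : ℝ := (S.p n (x : ℂ)).re

/-- Two-step induction: a solution of the recurrence whose first two values are real is real. -/
lemma im_zero_of_rec {a b : ℕ → ℝ} (ha : ∀ n, 0 < a n) {r : ℕ → ℂ} {x : ℝ}
    (h0 : (r 0).im = 0) (h1 : (r 1).im = 0)
    (hrec : ∀ n, (x : ℂ) * r (n + 1) =
      (a (n + 1) : ℂ) * r (n + 2) + (b (n + 1) : ℂ) * r (n + 1) + (a n : ℂ) * r n) (n : ℕ) :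
    (r n).im = 0 ∧ (r (n + 1)).im = 0 := by
  induction n with
  | zero => exact ⟨h0, h1⟩
  | succ n ih =>
    refine ⟨ih.2, ?_⟩
    have h := congrArg Complex.im (hrec n)
    simp [ih.1, ih.2] at h
    exact h.resolve_left (ha _).ne'

lemma q_ofReal (S : JacobiSetup) (n : ℕ) (x : ℝ) : S.q n (x : ℂ) = (qRe S n x : ℂ) := by
  have h := (im_zero_of_rec S.ha (r := fun n => S.q n (x : ℂ)) (x := x) (by simp [S.hq0])
    (by simp [S.hq1]) (fun n => S.hrecq n x) n).1
  apply Complex.ext <;> simp [qRe, h]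

lemma p_ofReal (S : JacobiSetup) (n : ℕ) (x : ℝ) : S.p n (x : ℂ) = (pRe S n x : ℂ) := by
  have h := (im_zero_of_rec S.ha (r := fun n => S.p n (x : ℂ)) (x := x) (by simp [S.hp0])
    (by simp [S.hp1, Complex.div_im]) (fun n => S.hrecp n x) n).1
  apply Complex.ext <;> simp [pRe, h]

lemma qRe_zero (S : JacobiSetup) (x : ℝ) : qRe S 0 x = 0 := by simp [qRe, S.hq0]

lemma qRe_one (S : JacobiSetup) (x : ℝ) : S.a 0 * qRe S 1 x = 1 := by
  have h := S.hq1 x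
  rw [q_ofReal] at h
  have h' : qRe S 1 x = 1 / S.a 0 := by exact_mod_cast h
  have := (S.ha 0).ne'
  rw [h']; field_simp

lemma pRe_zero (S : JacobiSetup) (x : ℝ) : pRe S 0 x = 1 := by simp [pRe, S.hp0]

lemma qRe_rec (S : JacobiSetup) (n : ℕ) (x : ℝ) : x * qRe S (n + 1) x =
    S.a (n + 1) * qRe S (n + 2) x + S.b (n + 1) * qRe S (n + 1) x + S.a n * qRe S n x := by
  have h := S.hrecq n x
  simp only [q_ofReal] at h
  exact_mod_cast h

lemma pRe_rec (S : JacobiSetup) (n : ℕ) (x : ℝ) : x * pRe S (n + 1) x =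
    S.a (n + 1) * pRe S (n + 2) x + S.b (n + 1) * pRe S (n + 1) x + S.a n * pRe S n x := by
  have h := S.hrecp n x
  simp only [p_ofReal] at h
  exact_mod_cast h

/-! ### Christoffel–Darboux formulas and variation of constants -/

/-- Christoffel–Darboux formula for `(qₖ, qₖ)`. -/
lemma darboux_qq (S : JacobiSetup) (x y : ℝ) (n : ℕ) :
    (x - y) * ∑ k ∈ Finset.range (n + 1), qRe S k x * qRe S k y =
      S.a n * (qRe S (n + 1) x * qRe S n y - qRe S n x * qRe S (n + 1) y) := by
  induction n with
  | zero => simp [qRe_zero]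
  | succ n ih =>
    rw [Finset.sum_range_succ, mul_add, ih]
    linear_combination qRe S (n + 1) y * qRe_rec S n x - qRe S (n + 1) x * qRe_rec S n y

/-- Christoffel–Darboux formula for `(qₖ, pₖ)`. -/
lemma darboux_qp (S : JacobiSetup) (x y : ℝ) (n : ℕ) :
    1 + (x - y) * ∑ k ∈ Finset.range (n + 1), qRe S k x * pRe S k y =
      S.a n * (qRe S (n + 1) x * pRe S n y - qRe S n x * pRe S (n + 1) y) := by
  induction n with
  | zero => simp [qRe_zero, pRe_zero, qRe_one]
  | succ n ih =>
    rw [Finset.sum_range_succ, mul_add, ← add_assoc, ih]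
    linear_combination pRe S (n + 1) y * qRe_rec S n x - qRe S (n + 1) x * pRe_rec S n y

lemma wronskian (S : JacobiSetup) (y : ℝ) (n : ℕ) :
    S.a n * (qRe S (n + 1) y * pRe S n y - qRe S n y * pRe S (n + 1) y) = 1 := by
  rw [← darboux_qp]; simp

/-- Variation of constants: `q(x)` expanded in the solutions `q(y)`, `p(y)` at another point. -/
lemma qRe_sub (S : JacobiSetup) (x y : ℝ) (n : ℕ) :
    qRe S n x - qRe S n y = (x - y) *
      ((∑ k ∈ Finset.range (n + 1), qRe S k x * pRe S k y) * qRe S n y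
        - (∑ k ∈ Finset.range (n + 1), qRe S k x * qRe S k y) * pRe S n y) := by
  linear_combination (-qRe S n x) * wronskian S y n - qRe S n y * darboux_qp S x y n
    + pRe S n y * darboux_qq S x y n

/-! ### Continuity of `x ↦ q(x)` in `ℓ²` -/

lemma summable_q (S : JacobiSetup) (x : ℝ) : Summable fun n => qRe S n x ^ 2 := by
  refine Summable.of_nonneg_of_le (fun n => sq_nonneg _) (fun n => ?_) (S.indet x)
  rw [q_ofReal S n x, Complex.norm_real, Real.norm_eq_abs, sq_abs]
  nlinarith [sq_nonneg ‖S.p n x‖]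

lemma summable_p (S : JacobiSetup) (x : ℝ) : Summable fun n => pRe S n x ^ 2 := by
  refine Summable.of_nonneg_of_le (fun n => sq_nonneg _) (fun n => ?_) (S.indet x)
  rw [p_ofReal S n x, Complex.norm_real, Real.norm_eq_abs, sq_abs]
  nlinarith [sq_nonneg ‖S.q n x‖]

lemma summable_mul_of_sq {f g : ℕ → ℝ} (hf : Summable fun n => f n ^ 2)
    (hg : Summable fun n => g n ^ 2) : Summable fun n => f n * g n := by
  refine Summable.of_norm_bounded (hf.add hg) (fun n => ?_)
  rw [Real.norm_eq_abs, abs_le]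
  constructor <;> nlinarith [sq_nonneg (f n + g n), sq_nonneg (f n - g n), sq_nonneg (f n),
    sq_nonneg (g n)]

lemma sum_mul_sq_le {f g : ℕ → ℝ} (hf : Summable fun n => f n ^ 2)
    (hg : Summable fun n => g n ^ 2) (s : Finset ℕ) :
    (∑ n ∈ s, f n * g n) ^ 2 ≤ (∑' n, f n ^ 2) * ∑' n, g n ^ 2 :=
  (Finset.sum_mul_sq_le_sq_mul_sq s f g).trans <|
    mul_le_mul (hf.sum_le_tsum s fun _ _ => sq_nonneg _) (hg.sum_le_tsum s fun _ _ => sq_nonneg _)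
      (Finset.sum_nonneg fun _ _ => sq_nonneg _) (tsum_nonneg fun _ => sq_nonneg _)

lemma tsum_mul_sq_le {f g : ℕ → ℝ} (hf : Summable fun n => f n ^ 2)
    (hg : Summable fun n => g n ^ 2) :
    (∑' n, f n * g n) ^ 2 ≤ (∑' n, f n ^ 2) * ∑' n, g n ^ 2 :=
  le_of_tendsto ((summable_mul_of_sq hf hg).hasSum.tendsto_sum_nat.pow 2)
    (Eventually.of_forall fun _ => sum_mul_sq_le hf hg _)

lemma summable_diff (S : JacobiSetup) (x y : ℝ) :
    Summable fun n => (qRe S n x - qRe S n y) ^ 2 := by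
  refine Summable.of_nonneg_of_le (fun n => sq_nonneg _) (fun n => ?_)
    (((summable_q S x).add (summable_q S y)).mul_left 2)
  nlinarith [sq_nonneg (qRe S n x + qRe S n y)]

/-- Cauchy–Schwarz applied to `qRe_sub`; the bound still involves `‖q(x)‖²`. -/
lemma diff_le (S : JacobiSetup) (x y : ℝ) :
    ∑' n, (qRe S n x - qRe S n y) ^ 2 ≤ 4 * (x - y) ^ 2 * (∑' n, qRe S n x ^ 2) *
      ((∑' n, pRe S n y ^ 2) * ∑' n, qRe S n y ^ 2) := by
  set X := ∑' n, qRe S n x ^ 2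
  set P := ∑' n, pRe S n y ^ 2
  set Q := ∑' n, qRe S n y ^ 2
  have hs : HasSum (fun n => (2 * (x - y) ^ 2 * (X * P)) * qRe S n y ^ 2
      + (2 * (x - y) ^ 2 * (X * Q)) * pRe S n y ^ 2)
      ((2 * (x - y) ^ 2 * (X * P)) * Q + (2 * (x - y) ^ 2 * (X * Q)) * P) :=
    ((summable_q S y).hasSum.mul_left _).add ((summable_p S y).hasSum.mul_left _)
  have hle := hasSum_le (fun n => ?_) (summable_diff S x y).hasSum hs
  · linarith
  · rw [qRe_sub]
    have h1 := sum_mul_sq_le (summable_q S x) (summable_p S y) (Finset.range (n + 1))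
    have h2 := sum_mul_sq_le (summable_q S x) (summable_q S y) (Finset.range (n + 1))
    set E := ∑ k ∈ Finset.range (n + 1), qRe S k x * pRe S k y
    set F := ∑ k ∈ Finset.range (n + 1), qRe S k x * qRe S k y
    have h3 : (E * qRe S n y - F * pRe S n y) ^ 2
        ≤ 2 * (E ^ 2 * qRe S n y ^ 2 + F ^ 2 * pRe S n y ^ 2) := by
      nlinarith [sq_nonneg (E * qRe S n y + F * pRe S n y)]
    have h4 := mul_le_mul_of_nonneg_right h1 (sq_nonneg (qRe S n y))
    have h5 := mul_le_mul_of_nonneg_right h2 (sq_nonneg (pRe S n y))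
    have h6 : (E * qRe S n y - F * pRe S n y) ^ 2
        ≤ 2 * (X * P * qRe S n y ^ 2 + X * Q * pRe S n y ^ 2) := by linarith
    have h7 := mul_le_mul_of_nonneg_left h6 (sq_nonneg (x - y))
    rw [mul_pow]
    linarith

/-- For `x` close to `y` the factor `‖q(x)‖²` in `diff_le` is absorbed, since
`‖q(x)‖² ≤ 2‖q(y)‖² + 2‖q(x) - q(y)‖²`. -/
lemma diff_le_local (S : JacobiSetup) (x y : ℝ)
    (h : 16 * (x - y) ^ 2 * ((∑' n, pRe S n y ^ 2) * ∑' n, qRe S n y ^ 2) ≤ 1) :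
    ∑' n, (qRe S n x - qRe S n y) ^ 2 ≤ 16 * (x - y) ^ 2 * (∑' n, qRe S n y ^ 2) *
      ((∑' n, pRe S n y ^ 2) * ∑' n, qRe S n y ^ 2) := by
  have hd := diff_le S x y
  have hX := hasSum_le (fun n => ?_) (summable_q S x).hasSum
    (((summable_q S y).hasSum.mul_left 2).add ((summable_diff S x y).hasSum.mul_left 2))
  · have hX0 : 0 ≤ ∑' n, qRe S n x ^ 2 := tsum_nonneg fun n => sq_nonneg _
    have hP0 : 0 ≤ ∑' n, pRe S n y ^ 2 := tsum_nonneg fun n => sq_nonneg _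
    have hQ0 : 0 ≤ ∑' n, qRe S n y ^ 2 := tsum_nonneg fun n => sq_nonneg _
    set X := ∑' n, qRe S n x ^ 2
    set P := ∑' n, pRe S n y ^ 2
    set Q := ∑' n, qRe S n y ^ 2
    have h1 := mul_le_mul_of_nonneg_left h hX0
    have hXQ : X ≤ 4 * Q := by linarith
    have h2 := mul_le_mul_of_nonneg_left hXQ
      (show 0 ≤ 4 * (x - y) ^ 2 * (P * Q) by positivity)
    linarith
  · nlinarith [sq_nonneg (qRe S n x - 2 * qRe S n y)]

/-- By `diff_le_local`, `q(x) → q(y)` in `ℓ²` as `x → y`; pair with `q(v)`. -/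
lemma continuous_pairing (S : JacobiSetup) (v : ℝ) :
    Continuous fun x : ℝ => ∑' n, qRe S n x * qRe S n v := by
  rw [continuous_iff_continuousAt]
  intro y
  set P := ∑' n, pRe S n y ^ 2 with hP
  set Q := ∑' n, qRe S n y ^ 2 with hQ
  set V := ∑' n, qRe S n v ^ 2 with hV
  have hV0 : 0 ≤ V := tsum_nonneg fun n => sq_nonneg _
  have hnear : ∀ᶠ x in 𝓝 y, 16 * (x - y) ^ 2 * (P * Q) ≤ 1 := by
    have hc : ContinuousAt (fun x : ℝ => 16 * (x - y) ^ 2 * (P * Q)) y := by fun_prop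
    have := hc.eventually (Iio_mem_nhds (show 16 * (y - y) ^ 2 * (P * Q) < 1 by simp))
    filter_upwards [this] with x hx using le_of_lt hx
  have hbound : ∀ᶠ x in 𝓝 y,
      |∑' n, qRe S n x * qRe S n v - ∑' n, qRe S n y * qRe S n v|
        ≤ √(16 * (x - y) ^ 2 * Q * (P * Q) * V) := by
    filter_upwards [hnear] with x hx
    rw [← (summable_mul_of_sq (summable_q S x) (summable_q S v)).tsum_sub
      (summable_mul_of_sq (summable_q S y) (summable_q S v))]
    apply Real.abs_le_sqrt
    simp_rw [← sub_mul]
    exact (tsum_mul_sq_le (summable_diff S x y) (summable_q S v)).trans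
      (mul_le_mul_of_nonneg_right (diff_le_local S x y hx) hV0)
  have hlim : Tendsto (fun x : ℝ => √(16 * (x - y) ^ 2 * Q * (P * Q) * V)) (𝓝 y) (𝓝 0) := by
    have hc : Continuous (fun x : ℝ => √(16 * (x - y) ^ 2 * Q * (P * Q) * V)) := by fun_prop
    simpa using hc.tendsto y
  rw [ContinuousAt, tendsto_iff_norm_sub_tendsto_zero]
  exact squeeze_zero' (Eventually.of_forall fun _ => norm_nonneg _) hbound hlim

lemma pairing_self_pos (S : JacobiSetup) (v : ℝ) : 0 < ∑' n, qRe S n v * qRe S n v := by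
  have h1 : qRe S 1 v ≠ 0 := fun h => by simpa [h] using qRe_one S v
  exact (summable_mul_of_sq (summable_q S v) (summable_q S v)).tsum_pos
    (fun n => mul_self_nonneg _) 1 (mul_self_pos.mpr h1)

/-! ### The Plücker relation and the sign of `C(u,v)` -/

/-- The identity `A(x,v) C(u,v) - A(u,v) C(x,v) = A(x,u)`. -/
lemma pluecker (S : JacobiSetup) (x u v : ℝ) :
    ((x - v) * ∑' n, qRe S n x * qRe S n v) * (1 + (u - v) * ∑' n, qRe S n u * pRe S n v)
      - ((u - v) * ∑' n, qRe S n u * qRe S n v) * (1 + (x - v) * ∑' n, qRe S n x * pRe S n v)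
      = (x - u) * ∑' n, qRe S n x * qRe S n u := by
  have tq : ∀ s t : ℝ, Tendsto
      (fun n => (s - t) * ∑ k ∈ Finset.range (n + 1), qRe S k s * qRe S k t) atTop
      (𝓝 ((s - t) * ∑' n, qRe S n s * qRe S n t)) := fun s t =>
    (((summable_mul_of_sq (summable_q S s) (summable_q S t)).hasSum.tendsto_sum_nat).comp
      (tendsto_add_atTop_nat 1)).const_mul _
  have tp : ∀ s t : ℝ, Tendsto
      (fun n => 1 + (s - t) * ∑ k ∈ Finset.range (n + 1), qRe S k s * pRe S k t) atTop
      (𝓝 (1 + (s - t) * ∑' n, qRe S n s * pRe S n t)) := fun s t =>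
    ((((summable_mul_of_sq (summable_q S s) (summable_p S t)).hasSum.tendsto_sum_nat).comp
      (tendsto_add_atTop_nat 1)).const_mul _).const_add _
  refine tendsto_nhds_unique
    (((tq x v).mul (tp u v)).sub ((tq u v).mul (tp x v))) ((tq x u).congr fun n => ?_)
  -- Plücker relation between the 2 × 2 minors of consecutive values at `x`, `u`, `v`, `v`
  simp only [darboux_qq, darboux_qp]
  linear_combination (-S.a n * (qRe S (n + 1) x * qRe S n u - qRe S n x * qRe S (n + 1) u))
    * wronskian S v n

lemma nevA_ofReal (S : JacobiSetup) (x v : ℝ) :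
    nevA S x v = (((x - v) * ∑' n, qRe S n x * qRe S n v : ℝ) : ℂ) := by
  simp only [nevA, q_ofReal]
  push_cast
  rfl

lemma nevC_ofReal (S : JacobiSetup) (x v : ℝ) :
    nevC S x v = ((1 + (x - v) * ∑' n, qRe S n x * pRe S n v : ℝ) : ℂ) := by
  simp only [nevC, q_ofReal, p_ofReal]
  push_cast
  rfl

/-- If `v ∈ ℝ`, `u ∈ ℝ` with `A(u,v) = 0`, `u < v` and `A(x,v) ≠ 0` on `(u,v)`, then
`C(u,v)` is a negative real number. -/
theorem stmt6 (S : JacobiSetup) (u v : ℝ) (huv : u < v)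
    (hA : nevA S (u : ℂ) (v : ℂ) = 0)
    (hne : ∀ x : ℝ, u < x → x < v → nevA S (x : ℂ) (v : ℂ) ≠ 0) :
    ∃ r : ℝ, r < 0 ∧ nevC S (u : ℂ) (v : ℂ) = (r : ℂ) := by
  refine ⟨_, ?_, nevC_ofReal S u v⟩
  rw [nevA_ofReal] at hA
  have hA' : (u - v) * ∑' n, qRe S n u * qRe S n v = 0 := by exact_mod_cast hA
  -- a point `x` of `(u, v)`, so close to `u` that the pairing of `q(x)` and `q(u)` is positive
  obtain ⟨x, hTx, hux, hxv⟩ :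
      ∃ x, 0 < ∑' n, qRe S n x * qRe S n u ∧ u < x ∧ x < v := by
    have h1 : ∀ᶠ x in 𝓝[>] u, 0 < ∑' n, qRe S n x * qRe S n u :=
      ((continuous_pairing S u).continuousAt.eventually
        (Ioi_mem_nhds (pairing_self_pos S u))).filter_mono nhdsWithin_le_nhds
    obtain ⟨x, hx, hI⟩ := (h1.and (Ioo_mem_nhdsGT huv)).exists
    exact ⟨x, hx, hI.1, hI.2⟩
  have hSx : 0 < ∑' n, qRe S n x * qRe S n v := by
    by_contra! hle
    obtain ⟨y, hy, hy0⟩ := intermediate_value_Icc hxv.le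
      (continuous_pairing S v).continuousOn ⟨hle, (pairing_self_pos S v).le⟩
    simp only at hy0
    rcases hy.2.lt_or_eq with hlt | heq
    · refine hne y (hux.trans_le hy.1) hlt ?_
      rw [nevA_ofReal, hy0]; simp
    · rw [heq] at hy0
      exact (pairing_self_pos S v).ne' hy0
  have hpl := pluecker S x u v
  rw [hA', zero_mul, sub_zero] at hpl
  have hpos : 0 < (x - u) * ∑' n, qRe S n x * qRe S n u := mul_pos (sub_pos.2 hux) hTx
  have hneg : (x - v) * ∑' n, qRe S n x * qRe S n v < 0 :=
    mul_neg_of_neg_of_pos (sub_neg.2 hxv) hSx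
  rw [← hpl] at hpos
  exact neg_of_mul_pos_right hpos hneg.le
end
end
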